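/- (Preservation of necessary landmark orderings under concretization.) Let M be a STRIPS planning model over fluents F, P ⊆ F, and φ, φ' : Set F → Prop. Say φ ≺_nec φ' holds in a model N if for every valid plan π ∈ Π_N with state trajectory S₀, …, Sₙ from the initial state and every index j with 0 < j ≤ n such that φ' holds at S_j and φ' does not hold at S_{j-1} (φ' is made true at step j), φ holds at S_{j-1}. If φ ≺_nec φ' holds in the projection f_P(M), then the lifted predicates S ↦ φ(S \ P) and S ↦ φ'(S \ P) satisfy the necessary ordering in M. -/

import Mathlib

/-- A STRIPS planning model over fluents `F` and action labels `A`. -/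
structure Strips (F : Type*) (A : Type*) where
  prec : A → Set F
  add : A → Set F
  del : A → Set F
  I : Set F
  G : Set F

/-- Result of applying action `a` in state `S`. -/
def Strips.res {F A : Type*} (M : Strips F A) (a : A) (S : Set F) : Set F :=
  (S \ M.del a) ∪ M.add a

/-- The state trajectory `S₀, S₁, …, Sₙ` of a plan from a state. -/
def Strips.traj {F A : Type*} (M : Strips F A) : List A → Set F → List (Set F)
  | [], S => [S]
  | a :: π, S => S :: M.traj π (M.res a S)

/-- A plan is executable from `S` if each action's precondition holds when applied. -/
def Strips.exec {F A : Type*} (M : Strips F A) : List A → Set F → Prop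
  | [], _ => True
  | a :: π, S => M.prec a ⊆ S ∧ M.exec π (M.res a S)

/-- The final state `Sₙ` of the trajectory of a plan from a state. -/
def Strips.finalState {F A : Type*} (M : Strips F A) (π : List A) (S : Set F) : Set F :=
  π.foldl (fun T a => M.res a T) S

/-- The state `S_k` of the trajectory of a plan from a state. -/
def Strips.stateAt {F A : Type*} (M : Strips F A) (π : List A) (S : Set F) (k : ℕ) : Set F :=
  M.finalState (π.take k) S

/-- A plan is valid if it is executable from the initial state and achieves the goal. -/
def Strips.Valid {F A : Type*} (M : Strips F A) (π : List A) : Prop :=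
  M.exec π M.I ∧ M.G ⊆ M.finalState π M.I

/-- The set `Π_M` of valid plans of `M`. -/
def Strips.Plans {F A : Type*} (M : Strips F A) : Set (List A) :=
  {π | M.Valid π}

/-- The projection `f_P(M)` of a model, projecting out the fluents in `P`. -/
def Strips.proj {F A : Type*} (M : Strips F A) (P : Set F) : Strips F A where
  prec a := M.prec a \ P
  add a := M.add a \ P
  del a := M.del a \ P
  I := M.I \ P
  G := M.G \ P

/-- Necessary landmark ordering `φ ≺_nec φ'` in model `N`. -/
def NecOrd {F A : Type*} (N : Strips F A) (φ φ' : Set F → Prop) : Prop :=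
  ∀ π ∈ N.Plans, ∀ j, 0 < j → j ≤ π.length →
    φ' (N.stateAt π N.I j) → ¬ φ' (N.stateAt π N.I (j - 1)) →
      φ (N.stateAt π N.I (j - 1))

theorem proj_res {F A : Type*} (M : Strips F A) (P : Set F) (a : A) (S : Set F) :
    (M.proj P).res a (S \ P) = M.res a S \ P := by
  ext x
  simp only [Strips.res, Strips.proj, Set.mem_union, Set.mem_diff]
  tauto

theorem proj_finalState {F A : Type*} (M : Strips F A) (P : Set F) (π : List A) (S : Set F) :
    (M.proj P).finalState π (S \ P) = M.finalState π S \ P := by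
  induction π generalizing S with
  | nil => rfl
  | cons a π ih =>
    have h := ih (M.res a S)
    rw [← proj_res] at h
    exact h

theorem proj_exec {F A : Type*} (M : Strips F A) (P : Set F) (π : List A) (S : Set F)
    (h : M.exec π S) : (M.proj P).exec π (S \ P) := by
  induction π generalizing S with
  | nil => trivial
  | cons a π ih =>
    refine ⟨Set.diff_subset_diff_left h.1, ?_⟩
    rw [proj_res]
    exact ih _ h.2

theorem stmt9 {F A : Type*} (M : Strips F A) (P : Set F) (φ φ' : Set F → Prop)
    (h : NecOrd (M.proj P) φ φ') :
    NecOrd M (fun S => φ (S \ P)) (fun S => φ' (S \ P)) := by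
  intro π hπ j hj hjn h1 h2
  have e : ∀ k, (M.proj P).stateAt π (M.proj P).I k = M.stateAt π M.I k \ P :=
    fun k => proj_finalState M P (π.take k) M.I
  have hv : π ∈ (M.proj P).Plans := by
    refine ⟨proj_exec M P π M.I hπ.1, ?_⟩
    have e2 : (M.proj P).finalState π (M.proj P).I = M.finalState π M.I \ P :=
      proj_finalState M P π M.I
    rw [e2]
    exact Set.diff_subset_diff_left hπ.2
  have := h π hv j hj hjn
  rw [e, e] at this
  exact this h1 h2
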